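/- arXiv:1707.03770 — 2 statements merged into one kernel-verified Lean document; each statement's English description precedes it below -/
import Mathlib

section
/- Let X and U be finite nonempty sets, P a matrix with rows indexed by X×U and columns by X having nonnegative entries and each row summing to 1, and β ∈ (0,1). Equip ℝ^{X×U} with the supremum norm ‖·‖_∞. Then the map Q is Lipschitz with constant 1/(1−β): for all ς₁, ς₂, ‖Q(ς₁) − Q(ς₂)‖_∞ ≤ (1/(1−β)) ‖ς₁ − ς₂‖_∞; and its inverse Q⁻¹, given explicitly by (Q⁻¹ q)(x,u) = q(x,u) − β Σ_{x'} P((x,u),x') min_{u'} q(x',u'), is Lipschitz with constant 1+β: for all q₁, q₂, ‖Q⁻¹(q₁) − Q⁻¹(q₂)‖_∞ ≤ (1+β) ‖q₁ − q₂‖_∞. -/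
/-- Infima over a finite nonempty type are nonexpansive for uniform distance. -/
lemma abs_ciInf_sub_ciInf_le {ι : Type*} [Finite ι] [Nonempty ι] {f g : ι → ℝ} {c : ℝ}
    (h : ∀ i, |f i - g i| ≤ c) : |(⨅ i, f i) - ⨅ i, g i| ≤ c := by
  have hf : (⨅ i, g i) - c ≤ ⨅ i, f i := le_ciInf fun i => by
    linarith [ciInf_le (Set.finite_range g).bddBelow i, (abs_le.mp (h i)).1]
  have hg : (⨅ i, f i) - c ≤ ⨅ i, g i := le_ciInf fun i => by
    linarith [ciInf_le (Set.finite_range f).bddBelow i, (abs_le.mp (h i)).2]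
  exact abs_le.mpr ⟨by linarith, by linarith⟩

/-- Averaging against a probability vector is nonexpansive for uniform distance. -/
lemma abs_sum_mul_sub_sum_mul_le {ι : Type*} [Fintype ι] {w f g : ι → ℝ} {c : ℝ}
    (hw0 : ∀ i, 0 ≤ w i) (hw1 : ∑ i, w i = 1) (h : ∀ i, |f i - g i| ≤ c) :
    |∑ i, w i * f i - ∑ i, w i * g i| ≤ c := by
  calc |∑ i, w i * f i - ∑ i, w i * g i| = |∑ i, w i * (f i - g i)| := by
        simp only [mul_sub, Finset.sum_sub_distrib]
    _ ≤ ∑ i, |w i * (f i - g i)| := Finset.abs_sum_le_sum_abs _ _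
    _ ≤ ∑ i, w i * c := Finset.sum_le_sum fun i _ => by
        rw [abs_mul, abs_of_nonneg (hw0 i)]
        exact mul_le_mul_of_nonneg_left (h i) (hw0 i)
    _ = c := by rw [← Finset.sum_mul, hw1, one_mul]

/-- In the supremum norm, `Q` is Lipschitz with constant `1/(1-β)` and its inverse
`Q⁻¹ q = q - β P (min q)` is Lipschitz with constant `1+β`. -/
theorem stmt14 {X U : Type*} [Fintype X] [Fintype U] [Nonempty X] [Nonempty U]
    (P : X × U → X → ℝ) (hP0 : ∀ p x', 0 ≤ P p x') (hP1 : ∀ p, ∑ x', P p x' = 1)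
    (β : ℝ) (hβ : β ∈ Set.Ioo (0 : ℝ) 1)
    (Q : (X × U → ℝ) → (X × U → ℝ))
    (hQ : ∀ ς p, Q ς p = ς p + β * ∑ x', P p x' * ⨅ u' : U, Q ς (x', u'))
    (Qinv : (X × U → ℝ) → (X × U → ℝ))
    (hQinv : ∀ q p, Qinv q p = q p - β * ∑ x', P p x' * ⨅ u' : U, q (x', u')) :
    (∀ ς, Qinv (Q ς) = ς) ∧ (∀ q, Q (Qinv q) = q) ∧
    (∀ ς₁ ς₂ : X × U → ℝ,
      (⨆ p, |Q ς₁ p - Q ς₂ p|) ≤ (1 / (1 - β)) * ⨆ p, |ς₁ p - ς₂ p|) ∧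
    (∀ q₁ q₂ : X × U → ℝ,
      (⨆ p, |Qinv q₁ p - Qinv q₂ p|) ≤ (1 + β) * ⨆ p, |q₁ p - q₂ p|) := by
  obtain ⟨hβ0, hβ1⟩ := hβ
  have le_dist (f g : X × U → ℝ) (p : X × U) : |f p - g p| ≤ ⨆ p, |f p - g p| :=
    le_ciSup (f := fun p => |f p - g p|) (Set.finite_range _).bddAbove p
  have abs_shift_le (q₁ q₂ : X × U → ℝ) (p : X × U) :
      |(q₁ p - Qinv q₁ p) - (q₂ p - Qinv q₂ p)| ≤ β * ⨆ p, |q₁ p - q₂ p| := by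
    rw [hQinv, hQinv, sub_sub_cancel, sub_sub_cancel, ← mul_sub, abs_mul, abs_of_pos hβ0]
    exact mul_le_mul_of_nonneg_left (abs_sum_mul_sub_sum_mul_le (hP0 p) (hP1 p) fun x' =>
      abs_ciInf_sub_ciInf_le fun u' => le_dist q₁ q₂ (x', u')) hβ0.le
  have expand (q₁ q₂ : X × U → ℝ) :
      (⨆ p, |q₁ p - q₂ p|) ≤ (1 / (1 - β)) * ⨆ p, |Qinv q₁ p - Qinv q₂ p| := by
    have : (⨆ p, |q₁ p - q₂ p|) ≤
        (⨆ p, |Qinv q₁ p - Qinv q₂ p|) + β * ⨆ p, |q₁ p - q₂ p| := ciSup_le fun p => by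
      have h₁ := abs_le.mp (abs_shift_le q₁ q₂ p)
      have h₂ := abs_le.mp (le_dist (Qinv q₁) (Qinv q₂) p)
      exact abs_le.mpr ⟨by linarith, by linarith⟩
    rw [one_div_mul_eq_div, le_div_iff₀ (by linarith)]
    linarith
  have left_inv (ς : X × U → ℝ) : Qinv (Q ς) = ς := by
    ext p
    rw [hQinv, hQ ς p, add_sub_cancel_right]
  refine ⟨left_inv, fun q => ?_, fun ς₁ ς₂ => ?_, fun q₁ q₂ => ciSup_le fun p => ?_⟩
  · ext p
    have h := (le_dist _ _ p).trans (expand (Q (Qinv q)) q)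
    simp only [left_inv, sub_self, abs_zero, ciSup_const, mul_zero] at h
    exact sub_eq_zero.mp (abs_nonpos_iff.mp h)
  · simpa only [left_inv] using expand (Q ς₁) (Q ς₂)
  · have h₁ := abs_le.mp (abs_shift_le q₁ q₂ p)
    have h₂ := abs_le.mp (le_dist q₁ q₂ p)
    exact abs_le.mpr ⟨by linarith, by linarith⟩
end

section
/- Let X and U be finite nonempty sets, P a matrix with rows indexed by X×U and columns by X having nonnegative entries and each row summing to 1, β ∈ (0,1), and let Π be the diagonal matrix on ℝ^{X×U} with diagonal entries ϖ(x,u) > 0. Fix an enumeration φ^{(1)},…,φ^{(ℓ)} of all deterministic policies φ : X → U, and for q : X×U → ℝ define φ^q := φ^{(κ)}, where κ is the smallest index i such that φ^{(i)}(x) ∈ argmin_u q(x,u) for every x ∈ X. Let (θ_n)_{n≥0} be a sequence in ℝ^{X×U}, (Â_n)_{n≥0} a sequence of matrices on ℝ^{X×U}, and c̄ : X×U → ℝ. Suppose: (a) there are a deterministic policy φ_∞ and N with φ^{θ_n} = φ_∞ for all n ≥ N; (b) Â_n → −Π (I − β P S_{φ_∞}) as n → ∞; and (c) Ĉ_n :=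 −Π⁻¹ Â_n θ_n → c̄ as n → ∞. Then θ_n → Q(c̄) as n → ∞. -/
open Matrix Filter Topology

/-- A vector whose sup norm is contracted by a factor `β < 1` vanishes. -/
lemma eq_zero_of_forall_abs_le_mul_norm {κ : Type*} [Fintype κ]
    {β : ℝ} (hβ : β ∈ Set.Ioo (0 : ℝ) 1)
    {d : κ → ℝ} (h : ∀ p, |d p| ≤ β * ‖d‖) : d = 0 := by
  have hle : ‖d‖ ≤ β * ‖d‖ :=
    (pi_norm_le_iff_of_nonneg (mul_nonneg hβ.1.le (norm_nonneg d))).2 h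
  have : ‖d‖ = 0 := by nlinarith [hβ.2, norm_nonneg d]
  exact norm_eq_zero.1 this

/-- An average of numbers bounded by `C` in absolute value is bounded by `C`. -/
lemma abs_sum_mul_le_of_forall_abs_le {κ : Type*} [Fintype κ] {w f : κ → ℝ} {C : ℝ}
    (hw0 : ∀ x, 0 ≤ w x) (hw1 : ∑ x, w x = 1) (hf : ∀ x, |f x| ≤ C) :
    |∑ x, w x * f x| ≤ C := by
  calc |∑ x, w x * f x| ≤ ∑ x, |w x * f x| := Finset.abs_sum_le_sum_abs _ _
    _ ≤ ∑ x, w x * C := Finset.sum_le_sum fun x _ => by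
        rw [abs_mul, abs_of_nonneg (hw0 x)]
        exact mul_le_mul_of_nonneg_left (hf x) (hw0 x)
    _ = C := by rw [← Finset.sum_mul, hw1, one_mul]

/-- The minimum over a finite nonempty type is nonexpansive in the sup norm. -/
lemma abs_iInf_sub_iInf_le {κ : Type*} [Finite κ] [Nonempty κ] {f g : κ → ℝ} {C : ℝ}
    (h : ∀ u, |f u - g u| ≤ C) : |(⨅ u, f u) - ⨅ u, g u| ≤ C := by
  obtain ⟨a, ha⟩ := exists_eq_ciInf_of_finite (f := f)
  obtain ⟨b, hb⟩ := exists_eq_ciInf_of_finite (f := g)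
  have hfb : (⨅ u, f u) ≤ f b := ciInf_le (Set.finite_range f).bddBelow b
  have hga : (⨅ u, g u) ≤ g a := ciInf_le (Set.finite_range g).bddBelow a
  have h₁ := abs_le.1 (h a)
  have h₂ := abs_le.1 (h b)
  exact abs_le.2 ⟨by linarith [h₁.1], by linarith [h₂.2]⟩

/-- The discounted Bellman equation for Q-functions has at most one solution. -/
lemma bellman_solution_unique {X U : Type*} [Fintype X] [Fintype U] [Nonempty U]
    {P : X × U → X → ℝ} (hP0 : ∀ p x', 0 ≤ P p x') (hP1 : ∀ p, ∑ x', P p x' = 1)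
    {β : ℝ} (hβ : β ∈ Set.Ioo (0 : ℝ) 1) {c q r : X × U → ℝ}
    (hq : ∀ p, q p = c p + β * ∑ x', P p x' * ⨅ u' : U, q (x', u'))
    (hr : ∀ p, r p = c p + β * ∑ x', P p x' * ⨅ u' : U, r (x', u')) : q = r := by
  refine sub_eq_zero.1 (eq_zero_of_forall_abs_le_mul_norm hβ fun p => ?_)
  have hd : (q - r) p
      = β * ∑ x', P p x' * ((⨅ u' : U, q (x', u')) - ⨅ u' : U, r (x', u')) := by
    rw [Pi.sub_apply, hq p, hr p]
    simp only [mul_sub, Finset.sum_sub_distrib]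
    ring
  rw [hd, abs_mul, abs_of_pos hβ.1]
  exact mul_le_mul_of_nonneg_left
    (abs_sum_mul_le_of_forall_abs_le (hP0 p) (hP1 p) fun x' =>
      abs_iInf_sub_iInf_le fun u => norm_le_pi_norm (q - r) (x', u)) hβ.1.le

/-- Matrix-vector multiplication is jointly continuous along filters. -/
lemma tendsto_mulVec {κ α : Type*} [Fintype κ] {l : Filter α} {A : α → Matrix κ κ ℝ}
    {B : Matrix κ κ ℝ} {v : α → κ → ℝ} {b : κ → ℝ}
    (hA : Tendsto A l (𝓝 B)) (hv : Tendsto v l (𝓝 b)) :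
    Tendsto (fun n => A n *ᵥ v n) l (𝓝 (B *ᵥ b)) := by
  have hcont : Continuous fun z : Matrix κ κ ℝ × (κ → ℝ) => z.1 *ᵥ z.2 :=
    continuous_fst.matrix_mulVec continuous_snd
  exact (hcont.tendsto (B, b)).comp (hA.prodMk_nhds hv)

/-- Solutions of linear systems depend continuously on the data near an invertible matrix. -/
lemma tendsto_inv_mulVec_of_tendsto_mulVec {κ α : Type*} [Fintype κ] [DecidableEq κ]
    {l : Filter α} {A : α → Matrix κ κ ℝ} {B : Matrix κ κ ℝ} {v : α → κ → ℝ} {b : κ → ℝ}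
    (hA : Tendsto A l (𝓝 B)) (hB : B.det ≠ 0)
    (hv : Tendsto (fun n => A n *ᵥ v n) l (𝓝 b)) : Tendsto v l (𝓝 (B⁻¹ *ᵥ b)) := by
  have hdet : Tendsto (fun n => (A n).det) l (𝓝 B.det) :=
    ((Continuous.matrix_det continuous_id).tendsto B).comp hA
  have hadj : Tendsto (fun n => (A n).adjugate) l (𝓝 B.adjugate) :=
    ((Continuous.matrix_adjugate continuous_id).tendsto B).comp hA
  have hmul : Tendsto (fun n => (A n).adjugate *ᵥ (A n *ᵥ v n)) l (𝓝 (B.adjugate *ᵥ b)) :=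
    tendsto_mulVec hadj hv
  have hlim := (hdet.inv₀ hB).smul hmul
  rw [Matrix.inv_def, Ring.inverse_eq_inv', Matrix.smul_mulVec]
  refine hlim.congr' ?_
  filter_upwards [hdet.eventually_ne hB] with n hn
  rw [Matrix.mulVec_mulVec, Matrix.adjugate_mul, Matrix.smul_mulVec, Matrix.one_mulVec,
    inv_smul_smul₀ hn]

/-- The policy-evaluation matrix `I - βPS_φ` is invertible. -/
lemma det_one_sub_smul_ne_zero {X U : Type*} [Fintype X] [Fintype U]
    [DecidableEq X] [DecidableEq U]
    {P : X × U → X → ℝ} (hP0 : ∀ p x', 0 ≤ P p x') (hP1 : ∀ p, ∑ x', P p x' = 1)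
    {β : ℝ} (hβ : β ∈ Set.Ioo (0 : ℝ) 1) {φ : X → U} {M : Matrix (X × U) (X × U) ℝ}
    (hM : ∀ v p, (M *ᵥ v) p = v p - β * ∑ x', P p x' * v (x', φ x')) : M.det ≠ 0 := by
  intro h0
  obtain ⟨v, hv, hMv⟩ := Matrix.exists_mulVec_eq_zero_iff.2 h0
  refine hv (eq_zero_of_forall_abs_le_mul_norm hβ fun p => ?_)
  have hp : v p = β * ∑ x', P p x' * v (x', φ x') := by
    rw [← sub_eq_zero, ← hM, hMv, Pi.zero_apply]
  rw [hp, abs_mul, abs_of_pos hβ.1]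
  exact mul_le_mul_of_nonneg_left
    (abs_sum_mul_le_of_forall_abs_le (hP0 p) (hP1 p) fun x' =>
      norm_le_pi_norm v (x', φ x')) hβ.1.le

/-- Inverse dynamic programming limit: if the greedy policies `φ^{θ_n}` are
eventually equal to `φ_∞`, `Â_n → -Π(I - βPS_{φ_∞})`, and
`Ĉ_n = -Π⁻¹ Â_n θ_n → c̄`, then `θ_n → Q(c̄)`. -/
theorem stmt19 {X U : Type*} [Fintype X] [Fintype U] [Nonempty X] [Nonempty U]
    [DecidableEq X] [DecidableEq U]
    (P : X × U → X → ℝ) (hP0 : ∀ p x', 0 ≤ P p x') (hP1 : ∀ p, ∑ x', P p x' = 1)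
    (β : ℝ) (hβ : β ∈ Set.Ioo (0 : ℝ) 1)
    (ϖ : X × U → ℝ) (hϖ : ∀ p, 0 < ϖ p)
    (ℓ : ℕ) (e : Fin ℓ ≃ (X → U))
    (ι : (X × U → ℝ) → Fin ℓ)
    (hιopt : ∀ (q : X × U → ℝ) (x : X) (u : U), q (x, e (ι q) x) ≤ q (x, u))
    (hιmin : ∀ (q : X × U → ℝ) (i : Fin ℓ),
      (∀ (x : X) (u : U), q (x, e i x) ≤ q (x, u)) → ι q ≤ i)
    (Sm : (X → U) → Matrix X (X × U) ℝ)
    (hSm : ∀ (φ : X → U) (x : X) (p : X × U),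
      Sm φ x p = if p.1 = x ∧ p.2 = φ x then 1 else 0)
    (Pm : Matrix (X × U) X ℝ) (hPm : ∀ p x', Pm p x' = P p x')
    (θ : ℕ → X × U → ℝ)
    (Ahat : ℕ → Matrix (X × U) (X × U) ℝ)
    (cbar : X × U → ℝ)
    (φinf : X → U)
    (ha : ∃ N : ℕ, ∀ n, N ≤ n → e (ι (θ n)) = φinf)
    (hb : Tendsto Ahat atTop
      (𝓝 (-(Matrix.diagonal ϖ * ((1 : Matrix (X × U) (X × U) ℝ) - β • (Pm * Sm φinf))))))
    (hc : Tendsto (fun n => -((Matrix.diagonal ϖ)⁻¹.mulVec ((Ahat n).mulVec (θ n))))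
      atTop (𝓝 cbar))
    (Qc : X × U → ℝ)
    (hQc : ∀ p, Qc p = cbar p + β * ∑ x', P p x' * ⨅ u' : U, Qc (x', u')) :
    Tendsto θ atTop (𝓝 Qc) := by
  set M : Matrix (X × U) (X × U) ℝ := 1 - β • (Pm * Sm φinf) with hMdef
  have hS : ∀ v x, (Sm φinf *ᵥ v) x = v (x, φinf x) := by
    intro v x
    simp only [Matrix.mulVec, dotProduct, hSm]
    rw [Finset.sum_eq_single (x, φinf x)]
    · simp
    · rintro ⟨y, u⟩ - hne
      rw [if_neg fun h => hne (Prod.ext h.1 h.2), zero_mul]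
    · simp
  have hM : ∀ v p, (M *ᵥ v) p = v p - β * ∑ x', P p x' * v (x', φinf x') := by
    intro v p
    rw [hMdef, Matrix.sub_mulVec, Matrix.one_mulVec, Matrix.smul_mulVec, ← Matrix.mulVec_mulVec]
    simp only [Pi.sub_apply, Pi.smul_apply, smul_eq_mul]
    congr 2
    simp only [Matrix.mulVec.eq_1 Pm, dotProduct, hPm, hS]
  have hMdet : M.det ≠ 0 := det_one_sub_smul_ne_zero hP0 hP1 hβ hM
  have hDdet : IsUnit (Matrix.diagonal ϖ).det := by
    rw [Matrix.det_diagonal, isUnit_iff_ne_zero]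
    exact Finset.prod_ne_zero_iff.2 fun p _ => ne_of_gt (hϖ p)
  -- Normalise the system to `-Π⁻¹ Â_n θ_n = Ĉ_n`, whose matrices converge to `M`.
  have hA : Tendsto (fun n => -((Matrix.diagonal ϖ)⁻¹ * Ahat n)) atTop (𝓝 M) := by
    have hcont : Continuous fun B : Matrix (X × U) (X × U) ℝ => -((Matrix.diagonal ϖ)⁻¹ * B) :=
      (continuous_const.matrix_mul continuous_id).neg
    have hlim := (hcont.tendsto _).comp hb
    simpa only [Function.comp_def, mul_neg, neg_neg, Matrix.nonsing_inv_mul_cancel_left _ _ hDdet] using hlim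
  have hθ : Tendsto θ atTop (𝓝 (M⁻¹ *ᵥ cbar)) :=
    tendsto_inv_mulVec_of_tendsto_mulVec hA hMdet
      (by simpa only [Matrix.neg_mulVec, Matrix.mulVec_mulVec] using hc)
  set L := M⁻¹ *ᵥ cbar with hL
  have hML : M *ᵥ L = cbar := by
    rw [hL, Matrix.mulVec_mulVec, Matrix.mul_nonsing_inv _ (isUnit_iff_ne_zero.2 hMdet),
      Matrix.one_mulVec]
  have hgreedy : ∀ x u, L (x, φinf x) ≤ L (x, u) := by
    intro x u
    obtain ⟨N, hN⟩ := ha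
    refine le_of_tendsto_of_tendsto (tendsto_pi_nhds.1 hθ _) (tendsto_pi_nhds.1 hθ _) ?_
    filter_upwards [eventually_ge_atTop N] with n hn
    rw [← hN n hn]
    exact hιopt (θ n) x u
  have hmin : ∀ x, ⨅ u, L (x, u) = L (x, φinf x) := fun x =>
    le_antisymm (ciInf_le (Set.finite_range fun u => L (x, u)).bddBelow (φinf x))
      (le_ciInf (hgreedy x))
  have hLeq : ∀ p, L p = cbar p + β * ∑ x', P p x' * ⨅ u' : U, L (x', u') := by
    intro p
    simp only [hmin]
    rw [← hML, hM]
    ring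
  rwa [← bellman_solution_unique hP0 hP1 hβ hLeq hQc]
end
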